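/- There exists a universal constant C > 0 (independent of the graph and the group) such that the following holds. Suppose V is finite, and let d₀ denote the diameter of (V, d), where d is the graph distance. Then for every f : V → ℝ with Σ_{m∈V} f(m) = 0 one has Σ_{m∈V} |f(m)| ≤ C · d₀ · Σ_{m∈V} |∇f|(m). -/

import Mathlib

/-!
The constant `C = 1` works. Since `f` has mean zero, `|V| f(m) = ∑ n, (f m - f n)`, so
`|V| ∑ |f| ≤ ∑ m, ∑ n, |f m - f n|`. To bound the right-hand side, average each term over the
finite group `Γ` of automorphisms: telescoping along a geodesic from `m` to `n` gives
`∑ φ : Γ, |f (φ m) - f (φ n)| ≤ d(m, n) * S`, where `S = ∑ φ : Γ, |∇f|(φ v)` does not depend on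
`v` by transitivity, and `|V| S = |Γ| ∑ |∇f|`. Summing over `m` and `n`, where each `φ` merely
permutes `V × V`, yields `∑ m, ∑ n, |f m - f n| ≤ d₀ |V| ∑ |∇f|`.
-/

open scoped BigOperators

/-- The (modulus of the) graph gradient: `|∇f|(m) = ∑_{n ∼ m} |f(m) - f(n)|`. -/
noncomputable def gradAbs {V : Type} (G : SimpleGraph V) (f : V → ℝ) (m : V) : ℝ :=
  ∑ᶠ n ∈ G.neighborSet m, |f m - f n|

/-- The diameter of a graph with respect to the graph distance. -/
noncomputable def graphDiam {V : Type} (G : SimpleGraph V) : ℕ :=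
  ⨆ m : V, ⨆ n : V, G.dist m n

theorem dist_le_graphDiam {V : Type} [Finite V] (G : SimpleGraph V) (m n : V) :
    G.dist m n ≤ graphDiam G :=
  (le_ciSup (f := fun n => G.dist m n) (Set.finite_range _).bddAbove n).trans
    (le_ciSup (f := fun m => ⨆ n, G.dist m n) (Set.finite_range _).bddAbove m)

theorem abs_sub_le_gradAbs {V : Type} [Finite V] (G : SimpleGraph V) (f : V → ℝ) {u v : V}
    (h : G.Adj u v) : |f u - f v| ≤ gradAbs G f u := by
  unfold gradAbs
  rw [finsum_mem_eq_finite_toFinset_sum _ (Set.toFinite (G.neighborSet u))]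
  exact Finset.single_le_sum (f := fun n => |f u - f n|) (fun _ _ => abs_nonneg _) (by simpa using h)

/-- Reindexing by right translation in the automorphism group. -/
theorem sum_iso_apply_eq {V : Type} {G : SimpleGraph V} [Fintype (G ≃g G)]
    (htr : ∀ u v : V, ∃ φ : G ≃g G, φ u = v) (h : V → ℝ) (u v : V) :
    ∑ φ : G ≃g G, h (φ u) = ∑ φ : G ≃g G, h (φ v) := by
  obtain ⟨ψ, rfl⟩ := htr u v
  exact (Fintype.sum_equiv (Equiv.mulRight ψ) _ _ (fun φ => rfl)).symm

theorem card_mul_sum_iso_apply {V : Type} [Fintype V] {G : SimpleGraph V} [Fintype (G ≃g G)]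
    (htr : ∀ u v : V, ∃ φ : G ≃g G, φ u = v) (h : V → ℝ) (o : V) :
    (Fintype.card V : ℝ) * ∑ φ : G ≃g G, h (φ o) = Fintype.card (G ≃g G) * ∑ m, h m := by
  calc (Fintype.card V : ℝ) * ∑ φ : G ≃g G, h (φ o)
      = ∑ v : V, ∑ φ : G ≃g G, h (φ v) := by
        simp [sum_iso_apply_eq htr h _ o]
    _ = ∑ φ : G ≃g G, ∑ v : V, h (φ v) := Finset.sum_comm
    _ = ∑ _φ : G ≃g G, ∑ v : V, h v :=
        Finset.sum_congr rfl fun φ _ => Equiv.sum_comp φ.toEquiv h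
    _ = _ := by simp

/-- Telescoping along a walk, averaged over automorphisms: every edge of the walk contributes
at most the common value `S` of the orbit sums of the gradient. -/
theorem sum_iso_abs_sub_le {V : Type} [Finite V] {G : SimpleGraph V} [Fintype (G ≃g G)]
    (f : V → ℝ) (S : ℝ) (hS : ∀ v : V, ∑ φ : G ≃g G, gradAbs G f (φ v) = S) {u v : V}
    (p : G.Walk u v) : ∑ φ : G ≃g G, |f (φ u) - f (φ v)| ≤ p.length * S := by
  induction p with
  | nil => simp
  | @cons u w v h p ih =>
    have h1 : ∑ φ : G ≃g G, |f (φ u) - f (φ w)| ≤ S := by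
      rw [← hS u]
      exact Finset.sum_le_sum fun φ _ => abs_sub_le_gradAbs G f (φ.map_adj_iff.2 h)
    calc ∑ φ : G ≃g G, |f (φ u) - f (φ v)|
        ≤ ∑ φ : G ≃g G, (|f (φ u) - f (φ w)| + |f (φ w) - f (φ v)|) :=
          Finset.sum_le_sum fun φ _ => abs_sub_le _ _ _
      _ ≤ S + p.length * S := by
          rw [Finset.sum_add_distrib]; exact add_le_add h1 ih
      _ = _ := by rw [SimpleGraph.Walk.length_cons]; push_cast; ring

theorem card_mul_sum_abs_le {V : Type} [Fintype V] (f : V → ℝ) (hf : ∑ m, f m = 0) :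
    (Fintype.card V : ℝ) * ∑ m, |f m| ≤ ∑ m, ∑ n, |f m - f n| := by
  rw [Finset.mul_sum]
  refine Finset.sum_le_sum fun m _ => ?_
  have h : (Fintype.card V : ℝ) * f m = ∑ n, (f m - f n) := by
    simp [Finset.sum_sub_distrib, hf]
  calc (Fintype.card V : ℝ) * |f m| = |(Fintype.card V : ℝ) * f m| := by simp [abs_mul]
    _ ≤ _ := by rw [h]; exact Finset.abs_sum_le_sum_abs _ _

/-- `L¹` Poincaré inequality (discrete, finite/compact case): there is a universal
constant `C > 0` such that on every connected, locally finite, vertex-transitive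
graph with finite vertex set and diameter `d₀`, every `f : V → ℝ` with zero mean
satisfies `∑_{m ∈ V} |f(m)| ≤ C d₀ ∑_{m ∈ V} |∇f|(m)`. -/
theorem discrete_poincare_L1 :
    ∃ C : ℝ, 0 < C ∧
      ∀ (V : Type) (G : SimpleGraph V), Countable V → G.Connected →
        (∀ v : V, (G.neighborSet v).Finite) →
        (∀ u v : V, ∃ φ : G ≃g G, φ u = v) →
        Finite V →
        ∀ f : V → ℝ, (∑ᶠ m, f m) = 0 →
          (∑ᶠ m, |f m|) ≤ C * (graphDiam G : ℝ) * ∑ᶠ m, gradAbs G f m := by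
  refine ⟨1, one_pos, ?_⟩
  intro V G _ hconn _ htr _ f hf
  have := Fintype.ofFinite V
  have : Finite (G ≃g G) := DFunLike.finite _
  have := Fintype.ofFinite (G ≃g G)
  obtain ⟨o⟩ := hconn.nonempty
  rw [finsum_eq_sum_of_fintype] at hf
  rw [finsum_eq_sum_of_fintype, finsum_eq_sum_of_fintype, one_mul]
  set W := ∑ m, gradAbs G f m with hW
  set S := ∑ φ : G ≃g G, gradAbs G f (φ o) with hSdef
  set F := ∑ m, ∑ n, |f m - f n| with hF
  set N : ℝ := (Fintype.card V : ℝ) with hN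
  set Γ : ℝ := (Fintype.card (G ≃g G) : ℝ) with hΓ
  have hNpos : 0 < N := Nat.cast_pos.2 (Fintype.card_pos_iff.2 ⟨o⟩)
  have hΓpos : 0 < Γ := Nat.cast_pos.2 (Fintype.card_pos_iff.2 ⟨1⟩)
  have hS : ∀ v : V, ∑ φ : G ≃g G, gradAbs G f (φ v) = S :=
    fun v => sum_iso_apply_eq htr (gradAbs G f) v o
  have hNS : N * S = Γ * W := card_mul_sum_iso_apply htr (gradAbs G f) o
  have hS0 : 0 ≤ S := Finset.sum_nonneg fun φ _ =>
    finsum_nonneg fun _ => finsum_nonneg fun _ => abs_nonneg _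
  have hpair : ∀ m n : V, ∑ φ : G ≃g G, |f (φ m) - f (φ n)| ≤ graphDiam G * S := by
    intro m n
    obtain ⟨p, hp⟩ := hconn.exists_walk_length_eq_dist m n
    refine (sum_iso_abs_sub_le f S hS p).trans (mul_le_mul_of_nonneg_right ?_ hS0)
    rw [hp]
    exact_mod_cast dist_le_graphDiam G m n
  have hΓF : Γ * F = ∑ m, ∑ n, ∑ φ : G ≃g G, |f (φ m) - f (φ n)| := by
    calc Γ * F = ∑ φ : G ≃g G, ∑ m, ∑ n, |f (φ m) - f (φ n)| := by
          have h : ∀ φ : G ≃g G, ∑ m, ∑ n, |f (φ m) - f (φ n)| = F := fun φ =>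
            (Finset.sum_congr rfl fun m _ =>
              Equiv.sum_comp φ.toEquiv fun n => |f (φ m) - f n|).trans
              (Equiv.sum_comp φ.toEquiv fun m => ∑ n, |f m - f n|)
          simp [h, hΓ]
      _ = ∑ m, ∑ φ : G ≃g G, ∑ n, |f (φ m) - f (φ n)| := Finset.sum_comm
      _ = _ := Finset.sum_congr rfl fun m _ => Finset.sum_comm
  have hle : Γ * F ≤ N * (N * (graphDiam G * S)) := by
    rw [hΓF]
    refine (Finset.sum_le_sum fun m _ => Finset.sum_le_sum fun n _ => hpair m n).trans_eq ?_
    simp [hN]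
  have hfin : Γ * F ≤ Γ * (N * (graphDiam G * W)) := by
    refine hle.trans_eq ?_
    linear_combination N * graphDiam G * hNS
  exact le_of_mul_le_mul_left
    ((card_mul_sum_abs_le f hf).trans (le_of_mul_le_mul_left hfin hΓpos)) hNpos
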